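/- Fix p ∈ (0,1) and μ ∈ ℝ with μ ≠ 0. For δ > 0 let q_δ = p·N(μ,δ²) + (1−p)·N(0,δ²) be the two-component Gaussian mixture measure on ℝ and let ν = N(0,1) be the standard Gaussian measure. Then lim_{δ→0⁺} [ KL(q_δ ‖ ν) + log δ ] = p·μ²/2 + p·log p + (1−p)·log(1−p) − 1/2. In particular, up to terms not depending on μ, the KL divergence of the dropout variational distribution from the standard normal prior behaves as (p/2)μ² in the small-variance limit (Lemma 1, single-coordinate case). -/

import Mathlib

open MeasureTheory ProbabilityTheory Real Filter Topology

/-- Kullback–Leibler divergence `KL(μ‖ν) = ∫ log (dμ/dν) dμ`. -/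
noncomputable def klDiv {α : Type*} [MeasurableSpace α] (μ ν : Measure α) : ℝ :=
  ∫ x, llr μ ν x ∂μ

/-- The two-component Gaussian mixture `p·N(m, δ²) + (1−p)·N(0, δ²)` on `ℝ`. -/
noncomputable def gaussianMixture (p m δ : ℝ) : Measure ℝ :=
  ENNReal.ofReal p • gaussianReal m (Real.toNNReal (δ ^ 2))
    + ENNReal.ofReal (1 - p) • gaussianReal 0 (Real.toNNReal (δ ^ 2))

lemma integrable_sq_gaussianReal (m : ℝ) (v : NNReal) :
    Integrable (fun x : ℝ => x ^ 2) (gaussianReal m v) := by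
  simpa using (memLp_id_gaussianReal' (μ := m) (v := v) 2 (by simp)).integrable_sq

lemma integral_sq_gaussianReal_zero_one : ∫ z : ℝ, z ^ 2 ∂gaussianReal 0 1 = 1 := by
  have h := variance_fun_id_gaussianReal (μ := 0) (v := 1)
  rw [variance_of_integral_eq_zero (by fun_prop) (by simp)] at h
  simpa using h

/-- The log-likelihood ratio against `N(0, 1)`, shifted by `log δ` and expressed in the standardised
coordinate `z` of a component of weight `a` and mean `c`, the other component (of weight `1 - a`)
having mean `c - d`. -/
noncomputable def standardizedLogRatio (a d c δ z : ℝ) : ℝ :=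
  -z ^ 2 / 2 + Real.log (a + (1 - a) * rexp ((z ^ 2 - (z + d / δ) ^ 2) / 2)) + (c + δ * z) ^ 2 / 2

lemma measurable_standardizedLogRatio (a d c δ : ℝ) :
    Measurable (standardizedLogRatio a d c δ) := by
  unfold standardizedLogRatio
  fun_prop

lemma abs_standardizedLogRatio_le {a : ℝ} (ha0 : 0 < a) (ha1 : a < 1) (d c δ z : ℝ) :
    |standardizedLogRatio a d c δ z| ≤ |Real.log a| + c ^ 2 + (1 + δ ^ 2) * z ^ 2 := by
  have hw : 0 < (1 - a) * rexp ((z ^ 2 - (z + d / δ) ^ 2) / 2) :=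
    mul_pos (by linarith) (exp_pos _)
  have hlower : Real.log a ≤ Real.log (a + (1 - a) * rexp ((z ^ 2 - (z + d / δ) ^ 2) / 2)) :=
    Real.log_le_log ha0 (by linarith)
  have hupper : Real.log (a + (1 - a) * rexp ((z ^ 2 - (z + d / δ) ^ 2) / 2)) ≤ z ^ 2 / 2 := by
    rw [Real.log_le_iff_le_exp (by linarith)]
    have h1 : rexp ((z ^ 2 - (z + d / δ) ^ 2) / 2) ≤ rexp (z ^ 2 / 2) :=
      exp_le_exp.2 (by nlinarith [sq_nonneg (z + d / δ)])
    have h2 : 1 ≤ rexp (z ^ 2 / 2) := one_le_exp (by positivity)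
    nlinarith
  have hsq : (c + δ * z) ^ 2 / 2 ≤ c ^ 2 + δ ^ 2 * z ^ 2 := by nlinarith [sq_nonneg (c - δ * z)]
  have hsq' : 0 ≤ (c + δ * z) ^ 2 / 2 := by positivity
  have hc : 0 ≤ c ^ 2 + δ ^ 2 * z ^ 2 := by positivity
  have hz := sq_nonneg z
  unfold standardizedLogRatio
  rw [abs_le]
  constructor <;> nlinarith [neg_abs_le (Real.log a), abs_nonneg (Real.log a)]

lemma integrable_standardizedLogRatio {a : ℝ} (ha0 : 0 < a) (ha1 : a < 1) (d c δ : ℝ) :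
    Integrable (standardizedLogRatio a d c δ) (gaussianReal 0 1) :=
  ((integrable_const (|Real.log a| + c ^ 2)).add
    ((integrable_sq_gaussianReal 0 1).const_mul (1 + δ ^ 2))).mono'
    (measurable_standardizedLogRatio a d c δ).aestronglyMeasurable
    (Eventually.of_forall fun z => abs_standardizedLogRatio_le ha0 ha1 d c δ z)

lemma tendsto_standardizedLogRatio {a d : ℝ} (ha0 : 0 < a) (hd : d ≠ 0) (c z : ℝ) :
    Tendsto (fun δ => standardizedLogRatio a d c δ z) (𝓝[>] 0)
      (𝓝 (-z ^ 2 / 2 + Real.log a + c ^ 2 / 2)) := by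
  have hid : Tendsto (fun δ : ℝ => δ) (𝓝[>] 0) (𝓝 0) :=
    tendsto_nhdsWithin_of_tendsto_nhds tendsto_id
  have habs : Tendsto (fun δ : ℝ => |z + d / δ|) (𝓝[>] 0) atTop := by
    have h : Tendsto (fun δ : ℝ => |d| * δ⁻¹ - |z|) (𝓝[>] 0) atTop :=
      tendsto_atTop_add_const_right _ _
        (tendsto_inv_nhdsGT_zero.const_mul_atTop (abs_pos.2 hd))
    refine tendsto_atTop_mono' _ ?_ h
    filter_upwards [self_mem_nhdsWithin] with δ hδ
    have h1 : |d / δ| = |d| * δ⁻¹ := by rw [abs_div, abs_of_pos (Set.mem_Ioi.1 hδ), div_eq_mul_inv]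
    have h2 := abs_sub_abs_le_abs_sub (d / δ) (-z)
    rw [abs_neg, h1, sub_neg_eq_add, add_comm (d / δ)] at h2
    exact h2
  have hexp : Tendsto (fun δ : ℝ => rexp ((z ^ 2 - (z + d / δ) ^ 2) / 2)) (𝓝[>] 0) (𝓝 0) := by
    refine tendsto_exp_atBot.comp (Tendsto.atBot_div_const (by norm_num) ?_)
    refine tendsto_atBot_add_const_left _ _ (tendsto_neg_atTop_atBot.comp ?_)
    simpa [Function.comp_def] using (tendsto_pow_atTop two_ne_zero).comp habs
  have hlog := ((hexp.const_mul (1 - a)).const_add a).log (by simpa using ha0.ne')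
  have hsq := (((hid.mul_const z).const_add c).pow 2).div_const 2
  simpa [standardizedLogRatio] using (hlog.const_add (-z ^ 2 / 2)).add hsq

lemma tendsto_integral_standardizedLogRatio {a d : ℝ} (ha0 : 0 < a) (ha1 : a < 1) (hd : d ≠ 0)
    (c : ℝ) :
    Tendsto (fun δ => ∫ z, standardizedLogRatio a d c δ z ∂gaussianReal 0 1) (𝓝[>] 0)
      (𝓝 (Real.log a + c ^ 2 / 2 - 1 / 2)) := by
  have hlim : ∫ z, (-z ^ 2 / 2 + Real.log a + c ^ 2 / 2) ∂gaussianReal 0 1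
      = Real.log a + c ^ 2 / 2 - 1 / 2 := by
    have hsq : Integrable (fun z : ℝ => -z ^ 2 / 2) (gaussianReal 0 1) :=
      (integrable_sq_gaussianReal 0 1).neg.div_const 2
    simp_rw [add_assoc]
    rw [integral_add hsq (integrable_const _), integral_div, integral_neg,
      integral_sq_gaussianReal_zero_one]
    simp
    ring
  rw [← hlim]
  refine tendsto_integral_filter_of_dominated_convergence
    (fun z => |Real.log a| + c ^ 2 + 2 * z ^ 2) ?_ ?_ ?_ ?_
  · exact Eventually.of_forall fun δ =>
      (measurable_standardizedLogRatio a d c δ).aestronglyMeasurable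
  · filter_upwards [Ioo_mem_nhdsGT (zero_lt_one' ℝ)] with δ hδ
    refine Eventually.of_forall fun z => (abs_standardizedLogRatio_le ha0 ha1 d c δ z).trans ?_
    have : 1 + δ ^ 2 ≤ 2 := by nlinarith [hδ.1, hδ.2]
    gcongr
  · exact (integrable_const _).add ((integrable_sq_gaussianReal 0 1).const_mul 2)
  · exact Eventually.of_forall fun z => tendsto_standardizedLogRatio ha0 hd c z

/-- The density of `gaussianMixture p m δ` with respect to Lebesgue measure. -/
noncomputable def gaussianMixturePDFReal (p m δ x : ℝ) : ℝ :=
  p * gaussianPDFReal m (Real.toNNReal (δ ^ 2)) x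
    + (1 - p) * gaussianPDFReal 0 (Real.toNNReal (δ ^ 2)) x

lemma measurable_gaussianMixturePDFReal (p m δ : ℝ) :
    Measurable (gaussianMixturePDFReal p m δ) := by
  unfold gaussianMixturePDFReal
  fun_prop

lemma gaussianMixture_eq_withDensity {p δ : ℝ} (hp0 : 0 ≤ p) (hp1 : p ≤ 1) (hδ : 0 < δ) (m : ℝ) :
    gaussianMixture p m δ = (gaussianReal 0 1).withDensity
      (fun x => ENNReal.ofReal (gaussianMixturePDFReal p m δ x / gaussianPDFReal 0 1 x)) := by
  have hv : Real.toNNReal (δ ^ 2) ≠ 0 := by simpa using hδ.ne'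
  have hmeas : Measurable
      (fun x => ENNReal.ofReal (gaussianMixturePDFReal p m δ x / gaussianPDFReal 0 1 x)) :=
    ((measurable_gaussianMixturePDFReal p m δ).div (measurable_gaussianPDFReal 0 1)).ennreal_ofReal
  rw [gaussianMixture, gaussianReal_of_var_ne_zero _ hv, gaussianReal_of_var_ne_zero _ hv,
    gaussianReal_of_var_ne_zero _ one_ne_zero, ← withDensity_smul _ (measurable_gaussianPDF _ _),
    ← withDensity_smul _ (measurable_gaussianPDF _ _),
    ← withDensity_add_left ((measurable_gaussianPDF _ _).const_smul _),
    ← withDensity_mul _ (measurable_gaussianPDF _ _) hmeas]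
  congr 1
  ext x
  have hpos := gaussianPDFReal_pos 0 1 x one_ne_zero
  have h0 := gaussianPDFReal_nonneg 0 (Real.toNNReal (δ ^ 2)) x
  have h1 := gaussianPDFReal_nonneg m (Real.toNNReal (δ ^ 2)) x
  simp only [Pi.add_apply, Pi.smul_apply, Pi.mul_apply, smul_eq_mul, gaussianPDF]
  rw [← ENNReal.ofReal_mul hp0, ← ENNReal.ofReal_mul (by linarith), ← ENNReal.ofReal_mul hpos.le,
    ← ENNReal.ofReal_add (by positivity) (mul_nonneg (by linarith) h0),
    mul_div_cancel₀ _ hpos.ne', gaussianMixturePDFReal]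

lemma llr_gaussianMixture {p δ : ℝ} (hp0 : 0 ≤ p) (hp1 : p ≤ 1) (hδ : 0 < δ) (m : ℝ) :
    llr (gaussianMixture p m δ) (gaussianReal 0 1) =ᵐ[gaussianMixture p m δ]
      fun x => Real.log (gaussianMixturePDFReal p m δ x / gaussianPDFReal 0 1 x) := by
  have hmeas : Measurable
      (fun x => ENNReal.ofReal (gaussianMixturePDFReal p m δ x / gaussianPDFReal 0 1 x)) :=
    ((measurable_gaussianMixturePDFReal p m δ).div (measurable_gaussianPDFReal 0 1)).ennreal_ofReal
  rw [gaussianMixture_eq_withDensity hp0 hp1 hδ]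
  refine (withDensity_absolutelyContinuous _ _).ae_le ?_
  filter_upwards [Measure.rnDeriv_withDensity (gaussianReal 0 1) hmeas] with x hx
  have h : 0 ≤ gaussianMixturePDFReal p m δ x / gaussianPDFReal 0 1 x :=
    div_nonneg (add_nonneg (mul_nonneg hp0 (gaussianPDFReal_nonneg _ _ _))
      (mul_nonneg (by linarith) (gaussianPDFReal_nonneg _ _ _))) (gaussianPDFReal_nonneg _ _ _)
  rw [llr, hx, ENNReal.toReal_ofReal h]

lemma log_two_gaussians_ratio {a δ : ℝ} (ha0 : 0 < a) (ha1 : a < 1) (hδ : 0 < δ) (d c z : ℝ) :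
    Real.log ((a * gaussianPDFReal c (Real.toNNReal (δ ^ 2)) (c + δ * z)
        + (1 - a) * gaussianPDFReal (c - d) (Real.toNNReal (δ ^ 2)) (c + δ * z))
        / gaussianPDFReal 0 1 (c + δ * z))
      = standardizedLogRatio a d c δ z - Real.log δ := by
  have hw : 0 < a + (1 - a) * rexp ((z ^ 2 - (z + d / δ) ^ 2) / 2) :=
    add_pos ha0 (mul_pos (by linarith) (exp_pos _))
  have hratio : (a * gaussianPDFReal c (Real.toNNReal (δ ^ 2)) (c + δ * z)
        + (1 - a) * gaussianPDFReal (c - d) (Real.toNNReal (δ ^ 2)) (c + δ * z))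
        / gaussianPDFReal 0 1 (c + δ * z)
      = rexp (-z ^ 2 / 2) * (a + (1 - a) * rexp ((z ^ 2 - (z + d / δ) ^ 2) / 2))
        * rexp ((c + δ * z) ^ 2 / 2) / δ := by
    have hsqrt : √(2 * π * δ ^ 2) = √(2 * π) * δ := by
      rw [Real.sqrt_mul (by positivity), Real.sqrt_sq hδ.le]
    have e1 : -(c + δ * z - c) ^ 2 / (2 * δ ^ 2) = -z ^ 2 / 2 := by
      field_simp
      ring
    have e2 : -(c + δ * z - (c - d)) ^ 2 / (2 * δ ^ 2)
        = -z ^ 2 / 2 + (z ^ 2 - (z + d / δ) ^ 2) / 2 := by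
      field_simp
      ring
    have e3 : -(c + δ * z - 0) ^ 2 / (2 * 1) = -((c + δ * z) ^ 2 / 2) := by ring
    have hpi : √(2 * π) ≠ 0 := by positivity
    simp only [gaussianPDFReal, Real.coe_toNNReal _ (sq_nonneg δ), NNReal.coe_one]
    rw [hsqrt, e1, e2, e3, exp_add, exp_neg ((c + δ * z) ^ 2 / 2), mul_one]
    field_simp
  rw [hratio, Real.log_div (by positivity) hδ.ne', Real.log_mul (by positivity) (by positivity),
    Real.log_mul (by positivity) hw.ne', Real.log_exp, Real.log_exp, standardizedLogRatio]

lemma gaussianReal_eq_map_standard (c δ : ℝ) :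
    gaussianReal c (Real.toNNReal (δ ^ 2)) = (gaussianReal 0 1).map (fun z => c + δ * z) := by
  have h : (fun z : ℝ => c + δ * z) = (fun x => c + x) ∘ fun z => δ * z := rfl
  rw [h, ← Measure.map_map (by fun_prop) (by fun_prop), gaussianReal_map_const_mul,
    gaussianReal_map_const_add]
  congr 1
  · simp
  · ext
    simp [sq_nonneg]

/-- The expectation under one component of a logarithm which becomes
`standardizedLogRatio a d c δ z - log δ` in the standardised coordinate. -/
lemma integrable_and_integral_gaussianReal {a d c δ : ℝ} (ha0 : 0 < a) (ha1 : a < 1)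
    {f : ℝ → ℝ} (hf : Measurable f)
    (h : ∀ z, f (c + δ * z) = standardizedLogRatio a d c δ z - Real.log δ) :
    Integrable f (gaussianReal c (Real.toNNReal (δ ^ 2))) ∧
      ∫ x, f x ∂gaussianReal c (Real.toNNReal (δ ^ 2))
        = (∫ z, standardizedLogRatio a d c δ z ∂gaussianReal 0 1) - Real.log δ := by
  have hint := integrable_standardizedLogRatio ha0 ha1 d c δ
  rw [gaussianReal_eq_map_standard]
  constructor
  · rw [integrable_map_measure hf.aestronglyMeasurable (by fun_prop)]
    exact (hint.sub (integrable_const (Real.log δ))).congr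
      (Eventually.of_forall fun z => (h z).symm)
  · rw [integral_map (by fun_prop) hf.aestronglyMeasurable]
    simp_rw [h]
    rw [integral_sub hint (integrable_const _)]
    simp

lemma klDiv_gaussianMixture_add_log {p δ : ℝ} (hp0 : 0 < p) (hp1 : p < 1) (hδ : 0 < δ) (m : ℝ) :
    klDiv (gaussianMixture p m δ) (gaussianReal 0 1) + Real.log δ
      = p * (∫ z, standardizedLogRatio p m m δ z ∂gaussianReal 0 1)
        + (1 - p) * ∫ z, standardizedLogRatio (1 - p) (-m) 0 δ z ∂gaussianReal 0 1 := by
  have hmeas : Measurable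
      (fun x => Real.log (gaussianMixturePDFReal p m δ x / gaussianPDFReal 0 1 x)) :=
    ((measurable_gaussianMixturePDFReal p m δ).div (measurable_gaussianPDFReal 0 1)).log
  obtain ⟨hint1, heq1⟩ := integrable_and_integral_gaussianReal (a := p) (d := m) (c := m) (δ := δ)
    hp0 hp1 hmeas (fun z => by
      simpa [gaussianMixturePDFReal] using log_two_gaussians_ratio hp0 hp1 hδ m m z)
  obtain ⟨hint0, heq0⟩ := integrable_and_integral_gaussianReal (a := 1 - p) (d := -m) (c := 0)
    (δ := δ) (by linarith) (by linarith) hmeas (fun z => by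
      rw [← log_two_gaussians_ratio (by linarith) (by linarith) hδ (-m) 0 z,
        gaussianMixturePDFReal, sub_sub_cancel, zero_sub, neg_neg, add_comm (p * _)])
  rw [klDiv, integral_congr_ae (llr_gaussianMixture hp0.le hp1.le hδ m), gaussianMixture,
    integral_add_measure (hint1.smul_measure ENNReal.ofReal_ne_top)
      (hint0.smul_measure ENNReal.ofReal_ne_top),
    integral_smul_measure, integral_smul_measure, heq1, heq0, ENNReal.toReal_ofReal hp0.le,
    ENNReal.toReal_ofReal (by linarith), smul_eq_mul, smul_eq_mul]
  ring

/-- For `p ∈ (0,1)` and `μ ≠ 0`,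
`lim_{δ→0⁺} [ KL(p·N(μ,δ²) + (1−p)·N(0,δ²) ‖ N(0,1)) + log δ ]
  = p·μ²/2 + p·log p + (1−p)·log(1−p) − 1/2`. -/
theorem klDiv_gaussianMixture_small_variance_limit (p μ : ℝ)
    (hp0 : 0 < p) (hp1 : p < 1) (hμ : μ ≠ 0) :
    Tendsto
      (fun δ : ℝ => klDiv (gaussianMixture p μ δ) (gaussianReal 0 1) + Real.log δ)
      (𝓝[>] 0)
      (𝓝 (p * μ ^ 2 / 2 + p * Real.log p + (1 - p) * Real.log (1 - p) - 1 / 2)) := by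
  have h1 := (tendsto_integral_standardizedLogRatio hp0 hp1 hμ μ).const_mul p
  have h0 := (tendsto_integral_standardizedLogRatio (sub_pos.2 hp1) (sub_lt_self 1 hp0)
    (neg_ne_zero.2 hμ) 0).const_mul (1 - p)
  have hlim := h1.add h0
  rw [show p * (Real.log p + μ ^ 2 / 2 - 1 / 2)
      + (1 - p) * (Real.log (1 - p) + 0 ^ 2 / 2 - 1 / 2)
      = p * μ ^ 2 / 2 + p * Real.log p + (1 - p) * Real.log (1 - p) - 1 / 2 by ring] at hlim
  refine hlim.congr' ?_
  filter_upwards [self_mem_nhdsWithin] with δ hδ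
  exact (klDiv_gaussianMixture_add_log hp0 hp1 hδ μ).symm
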